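/- Suppose X, U, W are subspaces of X_p with X = U ⊕ W, U isomorphic to ℓ_2, W isomorphic to ℓ_p, and X complemented in X_p with projection P. Let β' = lim_{n→∞} inf{ b : for every ε > 0 there exists u ∈ U with ‖P_n u‖ < ε and r(u) ≤ b } (assumed to exist, with β' ≤ 1), where P_n is the basis projection of X_p onto the span of the first n natural basis vectors. Then for any c > 0, δ > 0, and ε with 0 < ε < β'·c·δ/max{c, δ^{-1}}, there is no ε' with 0 < ε' < ε such that for every N ∈ ℕ there exist x ∈ X with ‖x‖ = 1 and a finite set E ⊆ {N, N+1, …} satisfying (a) ‖x_{|[1,N]}‖ < N^{-1}, (b) |x_{|E}|_2 ≥ δ·|x|_2, and (c) ε ≥ c·|x_{|E}|_2 ≥ ω(E)^{(p-2)/(2p)} ≥ ε'. -/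

import Mathlib

open scoped ENNReal

noncomputable section

/-- The sequence space `ℓ_p` (of real sequences), for a real exponent `p`. -/
abbrev SeqP (p : ℝ) := lp (fun _ : ℕ => ℝ) (ENNReal.ofReal p)

/-- The sequence space `ℓ_2` (of real sequences). -/
abbrev Seq2 := lp (fun _ : ℕ => ℝ) 2

/-- The space `X_{p,w}`, realized as the submodule of `ℓ_p ⊕_∞ ℓ_2` consisting of the
pairs `(x, y)` with `y n = w n * x n`.  Since the norm on the product is the maximum of
the two norms, this is exactly the completion of the finitely supported sequences under
`‖a‖ = max {|a|_p, |a|_{2,w}}`, the element with coordinates `a` being identified with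
the pair `(a, w·a)`. -/
def XpwMod (p : ℝ) (w : ℕ → ℝ) : Submodule ℝ (SeqP p × Seq2) where
  carrier := {z | ∀ n, (z.2 : ℕ → ℝ) n = w n * (z.1 : ℕ → ℝ) n}
  add_mem' := by
    intro a b ha hb n
    simp only [Prod.fst_add, Prod.snd_add, lp.coeFn_add, Pi.add_apply, ha n, hb n]
    ring
  zero_mem' := by
    intro n
    simp
  smul_mem' := by
    intro c a ha n
    simp only [Prod.smul_fst, Prod.smul_snd, lp.coeFn_smul, Pi.smul_apply, ha n,
      smul_eq_mul]
    ring

/-- The space `X_{p,w}` with its natural norm `‖a‖ = max {|a|_p, |a|_{2,w}}`. -/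
def Xpw (p : ℝ) (w : ℕ → ℝ) : Type := ↥(XpwMod p w)

variable {p : ℝ} {w : ℕ → ℝ}

instance [Fact (1 ≤ ENNReal.ofReal p)] : NormedAddCommGroup (Xpw p w) :=
  inferInstanceAs (NormedAddCommGroup ↥(XpwMod p w))

instance [Fact (1 ≤ ENNReal.ofReal p)] : NormedSpace ℝ (Xpw p w) :=
  inferInstanceAs (NormedSpace ℝ ↥(XpwMod p w))

/-- The pair of coordinates (in `ℓ_p` and in weighted `ℓ_2`) of an element of `X_{p,w}`. -/
def Xpw.pair (x : Xpw p w) : SeqP p × Seq2 := (show ↥(XpwMod p w) from x).val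

/-- The underlying sequence of coordinates of an element of `X_{p,w}`. -/
def seq (x : Xpw p w) : ℕ → ℝ := (Xpw.pair x).1

/-- `|x|_p` for `x ∈ X_{p,w}`. -/
def nrmP (x : Xpw p w) : ℝ := ‖(Xpw.pair x).1‖

/-- `|x|_2 = |x|_{2,w}` for `x ∈ X_{p,w}`. -/
def nrm2 (x : Xpw p w) : ℝ := ‖(Xpw.pair x).2‖

/-- The ratio `r(x) = |x|_2 / |x|_p`. -/
def ratio (x : Xpw p w) : ℝ := nrm2 x / nrmP x

/-- `ω(E) = ∑_{n ∈ E} w_n^{2p/(p-2)}`. -/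
def omegaE (p : ℝ) (w : ℕ → ℝ) (E : Set ℕ) : ℝ :=
  ∑' n : E, w (n : ℕ) ^ (2 * p / (p - 2))

/-- The pairing `⟨x, y⟩ = ∑_n x_n y_n w_n²`. -/
def pairW (w : ℕ → ℝ) (x y : Xpw p w) : ℝ :=
  ∑' n, seq x n * seq y n * w n ^ 2

/-- `w` is a weight sequence suitable for Rosenthal's space `X_p`: it is positive and for
every `ε > 0`, `∑_{w_n < ε} w_n^{2p/(p-2)} = ∞`. -/
def IsXpWeight (p : ℝ) (w : ℕ → ℝ) : Prop :=
  (∀ n, 0 < w n) ∧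
    ∀ ε : ℝ, 0 < ε →
      (∑' n : {n : ℕ | w n < ε}, ENNReal.ofReal (w (n : ℕ) ^ (2 * p / (p - 2)))) = ⊤

theorem memℓp_indicator {q : ℝ≥0∞} (E : Set ℕ) {f : ℕ → ℝ} (hf : Memℓp f q) :
    Memℓp (E.indicator f) q := by
  rcases ENNReal.trichotomy q with hq | hq | hq
  · subst hq
    refine memℓp_zero ((memℓp_zero_iff.mp hf).subset ?_)
    intro i hi
    simp only [Set.mem_setOf_eq] at hi ⊢
    intro h
    exact hi (by simp [Set.indicator_apply, h])
  · subst hq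
    obtain ⟨C, hC⟩ := (memℓp_infty_iff.mp hf)
    refine memℓp_infty ⟨C, ?_⟩
    rintro x ⟨i, rfl⟩
    exact le_trans (norm_indicator_le_norm_self f i) (hC ⟨i, rfl⟩)
  · refine memℓp_gen (Summable.of_nonneg_of_le (fun i => ?_) (fun i => ?_)
      (hf.summable hq))
    · positivity
    · exact Real.rpow_le_rpow (norm_nonneg _) (norm_indicator_le_norm_self f i) hq.le

/-- The restriction `x ↦ x_{|E}` of elements of `X_{p,w}` to a set `E` of coordinates. -/
def restrict (E : Set ℕ) (x : Xpw p w) : Xpw p w :=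
  show ↥(XpwMod p w) from
  ⟨(⟨E.indicator ((Xpw.pair x).1 : ℕ → ℝ), memℓp_indicator E (lp.memℓp (Xpw.pair x).1)⟩,
    ⟨E.indicator ((Xpw.pair x).2 : ℕ → ℝ), memℓp_indicator E (lp.memℓp (Xpw.pair x).2)⟩), by
    intro n
    by_cases hn : n ∈ E
    · change E.indicator ((Xpw.pair x).2 : ℕ → ℝ) n = w n * E.indicator ((Xpw.pair x).1 : ℕ → ℝ) n
      rw [Set.indicator_of_mem hn, Set.indicator_of_mem hn]
      exact (show ↥(XpwMod p w) from x).2 n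
    · change E.indicator ((Xpw.pair x).2 : ℕ → ℝ) n = w n * E.indicator ((Xpw.pair x).1 : ℕ → ℝ) n
      simp [Set.indicator_of_notMem hn]⟩


section LpLemmas
open Filter Topology

set_option linter.unusedSectionVars false

variable {q : ℝ≥0∞} [hq1 : Fact (1 ≤ q)]

/-- Finite truncation in `ℓ_q`. -/
def truncF (q : ℝ≥0∞) (s : Finset ℕ) (f : lp (fun _ : ℕ => ℝ) q) : lp (fun _ : ℕ => ℝ) q :=
  ∑ i ∈ s, lp.single q i (f i)

theorem truncF_apply_mem (s : Finset ℕ) (f : lp (fun _ : ℕ => ℝ) q) (j : ℕ) :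
    truncF q s f j = if j ∈ s then f j else 0 := by
  unfold truncF
  rw [lp.coeFn_sum, Finset.sum_apply]
  simp only [lp.single_apply, Pi.single_apply]
  simp

theorem norm_truncF_le (s : Finset ℕ) (f : lp (fun _ : ℕ => ℝ) q) :
    ‖truncF q s f‖ ≤ ∑ i ∈ s, |f i| := by
  unfold truncF
  refine (norm_sum_le _ _).trans (Finset.sum_le_sum fun i _ => ?_)
  rw [lp.norm_single (lt_of_lt_of_le one_pos hq1.out)]
  simp

theorem norm_add_eventually_le (hq : q ≠ ⊤) (z : lp (fun _ : ℕ => ℝ) q)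
    (y : ℕ → lp (fun _ : ℕ => ℝ) q) (C : ℝ) (hC : ∀ n, ‖y n‖ ≤ C)
    (hy : ∀ i, Tendsto (fun n => y n i) atTop (𝓝 0)) (γ : ℝ) (hγ : 0 < γ) :
    ∀ᶠ n in atTop, ‖z + y n‖ ^ q.toReal ≤ ‖z‖ ^ q.toReal + C ^ q.toReal + γ := by
  have hq0 : 0 < q.toReal :=
    ENNReal.toReal_pos (lt_of_lt_of_le one_pos hq1.out).ne' hq
  have hC0 : 0 ≤ C := (norm_nonneg _).trans (hC 0)
  set M := ‖z‖ ^ q.toReal + C ^ q.toReal with hM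
  have hM0 : 0 ≤ M := by positivity
  obtain ⟨τ, hτ, hτM⟩ : ∃ τ : ℝ, 0 < τ ∧ (M ^ (1 / q.toReal) + τ + τ) ^ q.toReal < M + γ := by
    have hc : Tendsto (fun τ : ℝ => (M ^ (1 / q.toReal) + τ + τ) ^ q.toReal) (𝓝[>] 0)
        (𝓝 ((M ^ (1 / q.toReal) + 0 + 0) ^ q.toReal)) := by
      apply Tendsto.mono_left _ nhdsWithin_le_nhds
      refine Continuous.tendsto (f := fun τ : ℝ => (M ^ (1 / q.toReal) + τ + τ) ^ q.toReal) ?_ 0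
      exact Continuous.rpow_const (by fun_prop) (fun _ => Or.inr hq0.le)
    have h1 : (M ^ (1 / q.toReal) + 0 + 0) ^ q.toReal = M := by
      rw [add_zero, add_zero, ← Real.rpow_mul hM0, one_div, inv_mul_cancel₀ hq0.ne', Real.rpow_one]
    rw [h1] at hc
    have h2 := hc.eventually (gt_mem_nhds (show M < M + γ by linarith))
    obtain ⟨τ, h3, h4⟩ := (h2.and self_mem_nhdsWithin).exists
    exact ⟨τ, h4, h3⟩
  obtain ⟨s, hs⟩ : ∃ s : Finset ℕ, ‖z - truncF q s z‖ < τ := by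
    have h := lp.hasSum_single hq z
    have h2 := (Metric.tendsto_nhds.1 h τ hτ).exists
    obtain ⟨s, h3⟩ := h2
    refine ⟨s, ?_⟩
    rw [dist_comm, dist_eq_norm] at h3
    exact h3
  have hsm : Tendsto (fun n => ∑ i ∈ s, |y n i|) atTop (𝓝 0) := by
    have : Tendsto (fun n => ∑ i ∈ s, |y n i|) atTop (𝓝 (∑ i ∈ s, |(0:ℝ)|)) :=
      tendsto_finsetSum _ fun i _ => (hy i).abs
    simpa using this
  filter_upwards [hsm.eventually (gt_mem_nhds hτ)] with n hn
  have hyt : ‖truncF q s (y n)‖ ≤ τ := (norm_truncF_le s (y n)).trans hn.le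
  set h := truncF q s z + (y n - truncF q s (y n)) with hh
  have e1 := lp.norm_compl_sum_single hq0 h s
  have e2 := lp.norm_compl_sum_single hq0 (y n) s
  have e3 : h - ∑ i ∈ s, lp.single q i (h i) = y n - ∑ i ∈ s, lp.single q i (y n i) := by
    change h - truncF q s h = y n - truncF q s (y n)
    ext j
    simp only [hh, lp.coeFn_sub, lp.coeFn_add, Pi.sub_apply, Pi.add_apply, truncF_apply_mem]
    split_ifs <;> ring
  have e4 : ∑ i ∈ s, ‖h i‖ ^ q.toReal = ∑ i ∈ s, ‖z i‖ ^ q.toReal := by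
    refine Finset.sum_congr rfl fun i hi => ?_
    simp [hh, truncF_apply_mem, hi]
  have e5 := lp.sum_rpow_le_norm_rpow hq0 z s
  have e6 : 0 ≤ ∑ i ∈ s, ‖y n i‖ ^ q.toReal :=
    Finset.sum_nonneg fun i _ => by positivity
  have e7 : ‖y n‖ ^ q.toReal ≤ C ^ q.toReal := by
    apply Real.rpow_le_rpow (norm_nonneg _) (hC n) hq0.le
  rw [e3, e2, e4] at e1
  have e8 : ‖h‖ ^ q.toReal ≤ M := by linarith
  have e9 : ‖h‖ ≤ M ^ (1 / q.toReal) := by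
    have := Real.rpow_le_rpow (by positivity) e8 (show 0 ≤ 1 / q.toReal by positivity)
    rwa [← Real.rpow_mul (norm_nonneg _), mul_one_div_cancel hq0.ne', Real.rpow_one] at this
  have e10 : z + y n = h + (z - truncF q s z) + truncF q s (y n) := by
    rw [hh]; abel
  have e11 : ‖z + y n‖ ≤ M ^ (1 / q.toReal) + τ + τ := by
    rw [e10]
    refine (norm_add₃_le).trans ?_
    gcongr
  exact (Real.rpow_le_rpow (norm_nonneg _) e11 hq0.le).trans hτM.le

/-- The generic gliding hump argument. -/
theorem hump_false (hq : q ≠ ⊤)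
    (y : ℕ → lp (fun _ : ℕ => ℝ) q) (C : ℝ) (hC : ∀ n, ‖y n‖ ≤ C)
    (hy : ∀ i, Tendsto (fun n => y n i) atTop (𝓝 0))
    (φ : lp (fun _ : ℕ => ℝ) q → ℝ) (hφ0 : 0 ≤ φ 0) (κ : ℝ) (hκ : 0 < κ)
    (hφ : ∃ᶠ n in atTop, ∀ z, φ z + κ ≤ φ (z + y n) ∨ φ z + κ ≤ φ (z + - y n))
    (K r : ℝ) (hr0 : 0 < r) (hr : r < q.toReal) (hφK : ∀ z, φ z ≤ K * ‖z‖ ^ r) : False := by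
  have hq0 : 0 < q.toReal :=
    ENNReal.toReal_pos (lt_of_lt_of_le one_pos hq1.out).ne' hq
  have hC0 : 0 ≤ C := (norm_nonneg _).trans (hC 0)
  set D := C ^ q.toReal + 1 with hD
  have hD0 : 0 < D := by positivity
  have key : ∀ N : ℕ, ∃ z : lp (fun _ : ℕ => ℝ) q, ‖z‖ ^ q.toReal ≤ N * D ∧ N * κ ≤ φ z := by
    intro N
    induction N with
    | zero => exact ⟨0, by simp [Real.zero_rpow hq0.ne'], by simpa using hφ0⟩
    | succ N ih =>
      obtain ⟨z, hz1, hz2⟩ := ih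
      have h1 := norm_add_eventually_le hq z y C hC hy 1 one_pos
      have h2 := norm_add_eventually_le hq z (fun n => - y n) C
        (fun n => by rw [norm_neg]; exact hC n)
        (fun i => by simpa using (hy i).neg) 1 one_pos
      obtain ⟨n, hn, h1, h2⟩ := (hφ.and_eventually (h1.and h2)).exists
      push_cast
      rcases hn z with h | h
      · exact ⟨z + y n, by linarith, by linarith⟩
      · exact ⟨z + - y n, by linarith, by linarith⟩
  have hbound : ∀ N : ℕ, (N : ℝ) * κ ≤ |K| * (N * D) ^ (r / q.toReal) := by
    intro N
    obtain ⟨z, hz1, hz2⟩ := key N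
    have h3 : ‖z‖ ^ r ≤ (N * D) ^ (r / q.toReal) := by
      have := Real.rpow_le_rpow (by positivity) hz1 (show 0 ≤ r / q.toReal by positivity)
      rwa [← Real.rpow_mul (norm_nonneg _), mul_div_cancel₀ _ hq0.ne'] at this
    calc (N : ℝ) * κ ≤ K * ‖z‖ ^ r := hz2.trans (hφK z)
      _ ≤ |K| * ‖z‖ ^ r := by gcongr; exact le_abs_self K
      _ ≤ _ := by gcongr
  have hlt : 0 < 1 - r / q.toReal := by
    rw [sub_pos, div_lt_one hq0]; exact hr
  have ht : Tendsto (fun N : ℕ => (N : ℝ) ^ (1 - r / q.toReal)) atTop atTop :=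
    (tendsto_rpow_atTop hlt).comp tendsto_natCast_atTop_atTop
  obtain ⟨N, hN1, hN2⟩ := ((ht.eventually_gt_atTop (|K| * D ^ (r / q.toReal) / κ)).and
    (eventually_gt_atTop 0)).exists
  have hNpos : (0:ℝ) < N := by exact_mod_cast hN2
  have h := hbound N
  rw [Real.mul_rpow hNpos.le hD0.le] at h
  rw [div_lt_iff₀ hκ, Real.rpow_sub hNpos, Real.rpow_one, div_mul_eq_mul_div,
    lt_div_iff₀ (by positivity)] at hN1
  linarith

theorem weak_null (hq : q ≠ ⊤) (hq' : 1 < q.toReal)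
    (y : ℕ → lp (fun _ : ℕ => ℝ) q) (C : ℝ) (hC : ∀ n, ‖y n‖ ≤ C)
    (hy : ∀ i, Tendsto (fun n => y n i) atTop (𝓝 0))
    (f : lp (fun _ : ℕ => ℝ) q →L[ℝ] ℝ) : Tendsto (fun n => f (y n)) atTop (𝓝 0) := by
  rw [Metric.tendsto_nhds]
  intro η hη
  by_contra hcon
  rw [not_eventually] at hcon
  refine hump_false hq y C hC hy f (by simp) η hη ?_ ‖f‖ 1 one_pos hq' ?_
  · refine hcon.mono fun n hn z => ?_
    rw [Real.dist_eq, sub_zero, not_lt] at hn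
    rw [map_add, map_add, map_neg]
    rcases le_abs.1 hn with h | h
    · left; linarith
    · right; linarith
  · intro z
    rw [Real.rpow_one]
    exact (le_abs_self _).trans (f.le_opNorm z)

theorem pitt_null (hq : q ≠ ⊤) (hq' : 2 < q.toReal)
    (y : ℕ → lp (fun _ : ℕ => ℝ) q) (C : ℝ) (hC : ∀ n, ‖y n‖ ≤ C)
    (hy : ∀ i, Tendsto (fun n => y n i) atTop (𝓝 0))
    {H : Type*} [NormedAddCommGroup H] [InnerProductSpace ℝ H]
    (S : lp (fun _ : ℕ => ℝ) q →L[ℝ] H) : Tendsto (fun n => ‖S (y n)‖) atTop (𝓝 0) := by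
  rw [Metric.tendsto_nhds]
  intro η hη
  by_contra hcon
  rw [not_eventually] at hcon
  refine hump_false hq y C hC hy (fun z => ‖S z‖ ^ 2) (by simp) (η ^ 2) (by positivity) ?_
    (‖S‖ ^ 2) 2 two_pos hq' ?_
  · refine hcon.mono fun n hn z => ?_
    rw [Real.dist_eq, sub_zero, not_lt, abs_norm] at hn
    have h2 : η ^ 2 ≤ ‖S (y n)‖ ^ 2 := by gcongr
    simp only [← sub_eq_add_neg]
    rw [map_add, map_sub]
    rw [norm_add_sq_real, norm_sub_sq_real]
    rcases le_total 0 (inner ℝ (S z) (S (y n))) with h | h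
    · left; linarith
    · right; linarith
  · intro z
    have := S.le_opNorm z
    rw [Real.rpow_two, ← mul_pow]
    gcongr

end LpLemmas

section XpwLemmas
open Filter Topology

theorem ofReal_ne_zero_of_two_lt (hp : 2 < p) : ENNReal.ofReal p ≠ 0 := by
  rw [Ne, ENNReal.ofReal_eq_zero, not_le]; linarith

theorem pair_snd_apply (x : Xpw p w) (n : ℕ) :
    (Xpw.pair x).2 n = w n * (Xpw.pair x).1 n :=
  (show ↥(XpwMod p w) from x).2 n

theorem pair_restrict_fst (E : Set ℕ) (x : Xpw p w) (n : ℕ) :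
    (Xpw.pair (restrict E x)).1 n = E.indicator (fun n => (Xpw.pair x).1 n) n := rfl

theorem pair_restrict_snd (E : Set ℕ) (x : Xpw p w) (n : ℕ) :
    (Xpw.pair (restrict E x)).2 n = E.indicator (fun n => (Xpw.pair x).2 n) n := rfl

section
variable [Fact (1 ≤ ENNReal.ofReal p)]

theorem pair_add (x y : Xpw p w) : Xpw.pair (x + y) = Xpw.pair x + Xpw.pair y := rfl

theorem restrict_add (E : Set ℕ) (x y : Xpw p w) :
    Xpw.pair (restrict E (x + y)) = Xpw.pair (restrict E x) + Xpw.pair (restrict E y) := by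
  refine Prod.ext ?_ ?_
  · ext n
    simp only [Prod.fst_add, lp.coeFn_add, Pi.add_apply, pair_restrict_fst, pair_add]
    by_cases hn : n ∈ E <;> simp [hn]
  · ext n
    simp only [Prod.snd_add, lp.coeFn_add, Pi.add_apply, pair_restrict_snd, pair_add]
    by_cases hn : n ∈ E <;> simp [hn]

theorem norm_Xpw (x : Xpw p w) : ‖x‖ = max (nrmP x) (nrm2 x) := rfl

theorem nrm2_add_le (x y : Xpw p w) : nrm2 (x + y) ≤ nrm2 x + nrm2 y :=
  norm_add_le (Xpw.pair x).2 (Xpw.pair y).2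

theorem nrm2_restrict_add_le (E : Set ℕ) (x y : Xpw p w) :
    nrm2 (restrict E (x + y)) ≤ nrm2 (restrict E x) + nrm2 (restrict E y) := by
  unfold nrm2
  rw [restrict_add]
  exact norm_add_le _ _

theorem nrm2_restrict_le (E : Set ℕ) (x : Xpw p w) : nrm2 (restrict E x) ≤ nrm2 x := by
  refine lp.norm_mono two_ne_zero fun i => ?_
  rw [pair_restrict_snd]
  exact norm_indicator_le_norm_self (fun n => (Xpw.pair x).2 n) i

theorem nrmP_restrict_le (hp : 2 < p) (E : Set ℕ) (x : Xpw p w) :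
    nrmP (restrict E x) ≤ nrmP x := by
  refine lp.norm_mono (ofReal_ne_zero_of_two_lt hp) fun i => ?_
  rw [pair_restrict_fst]
  exact norm_indicator_le_norm_self (fun n => (Xpw.pair x).1 n) i

theorem nrmP_nonneg (x : Xpw p w) : 0 ≤ nrmP x := norm_nonneg _

theorem nrm2_nonneg (x : Xpw p w) : 0 ≤ nrm2 x := norm_nonneg _

/-- The inclusion of `X_{p,w}` into the product, as a linear isometry. -/
def pairL (p : ℝ) (w : ℕ → ℝ) [Fact (1 ≤ ENNReal.ofReal p)] :
    Xpw p w →ₗᵢ[ℝ] SeqP p × Seq2 where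
  toFun := Xpw.pair
  map_add' _ _ := rfl
  map_smul' _ _ := rfl
  norm_map' _ := rfl

theorem Xpw_complete : CompleteSpace (Xpw p w) := by
  have hc : IsClosed ((XpwMod p w : Submodule ℝ (SeqP p × Seq2)) : Set (SeqP p × Seq2)) := by
    have : ((XpwMod p w : Submodule ℝ (SeqP p × Seq2)) : Set (SeqP p × Seq2))
        = ⋂ n, {z | z.2 n = w n * z.1 n} := by
      ext z
      simp only [Set.mem_iInter]
      rfl
    rw [this]
    refine isClosed_iInter fun n => ?_
    have h1 : Continuous fun z : SeqP p × Seq2 => z.2 n :=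
      (lp.evalCLM ℝ (fun _ : ℕ => ℝ) 2 n).continuous.comp continuous_snd
    have h2 : Continuous fun z : SeqP p × Seq2 => z.1 n :=
      (lp.evalCLM ℝ (fun _ : ℕ => ℝ) (ENNReal.ofReal p) n).continuous.comp continuous_fst
    exact isClosed_eq h1 (continuous_const.mul h2)
  exact hc.completeSpace_coe

theorem Xpw_weak_null (hp : 2 < p) (x : ℕ → Xpw p w) (C : ℝ) (hC : ∀ n, ‖x n‖ ≤ C)
    (hx : ∀ i, Tendsto (fun n => (Xpw.pair (x n)).1 i) atTop (𝓝 0))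
    (g : Xpw p w →L[ℝ] ℝ) : Tendsto (fun n => g (x n)) atTop (𝓝 0) := by
  obtain ⟨F, hF, -⟩ := exists_extension_norm_eq (XpwMod p w)
    (show StrongDual ℝ ↥(XpwMod p w) from g)
  have hF' : ∀ y : Xpw p w, F (Xpw.pair y) = g y := fun y => hF y
  have h1 : Tendsto (fun n => (F.comp (ContinuousLinearMap.inl ℝ (SeqP p) Seq2))
      (Xpw.pair (x n)).1) atTop (𝓝 0) := by
    refine weak_null ENNReal.ofReal_ne_top ?_ _ C
      (fun n => (le_max_left _ _).trans (hC n)) hx _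
    rw [ENNReal.toReal_ofReal (by linarith)]; linarith
  have h2 : Tendsto (fun n => (F.comp (ContinuousLinearMap.inr ℝ (SeqP p) Seq2))
      (Xpw.pair (x n)).2) atTop (𝓝 0) := by
    refine weak_null ENNReal.ofNat_ne_top (by norm_num) _ C
      (fun n => (le_max_right _ _).trans (hC n)) (fun i => ?_) _
    have h := (hx i).const_mul (w i)
    rw [mul_zero] at h
    exact h.congr fun n => (pair_snd_apply (x n) i).symm
  have h3 := h1.add h2
  rw [add_zero] at h3
  refine h3.congr fun n => ?_
  rw [← hF' (x n), ContinuousLinearMap.comp_apply, ContinuousLinearMap.comp_apply, ← map_add]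
  simp

theorem restrict_lt_tendsto (u : ℕ → Xpw p w)
    (hu : ∀ i, Tendsto (fun n => (Xpw.pair (u n)).1 i) atTop (𝓝 0)) (k : ℕ) :
    Tendsto (fun n => ‖restrict {j : ℕ | j < k} (u n)‖) atTop (𝓝 0) := by
  have h1 : Tendsto (fun n => ∑ i ∈ Finset.range k, |(Xpw.pair (u n)).1 i|) atTop (𝓝 0) := by
    have : Tendsto (fun n => ∑ i ∈ Finset.range k, |(Xpw.pair (u n)).1 i|) atTop
        (𝓝 (∑ i ∈ Finset.range k, |(0:ℝ)|)) :=
      tendsto_finsetSum _ fun i _ => (hu i).abs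
    simpa using this
  have h2 : Tendsto (fun n => ∑ i ∈ Finset.range k, |(Xpw.pair (u n)).2 i|) atTop (𝓝 0) := by
    have : Tendsto (fun n => ∑ i ∈ Finset.range k, |(Xpw.pair (u n)).2 i|) atTop
        (𝓝 (∑ i ∈ Finset.range k, |w i * (0:ℝ)|)) := by
      refine tendsto_finsetSum _ fun i _ => ?_
      simp only [pair_snd_apply]
      exact ((hu i).const_mul (w i)).abs
    simpa using this
  have h3 := h1.max h2
  rw [max_self] at h3
  refine squeeze_zero (fun _ => norm_nonneg _) (fun n => ?_) h3
  rw [norm_Xpw]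
  refine max_le_max ?_ ?_
  · have : (Xpw.pair (restrict {j : ℕ | j < k} (u n))).1
        = truncF _ (Finset.range k) (Xpw.pair (u n)).1 := by
      ext j
      rw [pair_restrict_fst, truncF_apply_mem]
      simp [Set.indicator_apply]
    unfold nrmP
    rw [this]
    exact norm_truncF_le _ _
  · have : (Xpw.pair (restrict {j : ℕ | j < k} (u n))).2
        = truncF _ (Finset.range k) (Xpw.pair (u n)).2 := by
      ext j
      rw [pair_restrict_snd, truncF_apply_mem]
      simp [Set.indicator_apply]
    unfold nrm2
    rw [this]
    exact norm_truncF_le _ _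

theorem abs_coord_le (hp : 2 < p) (x : Xpw p w) (E : Set ℕ) (i : ℕ) (hi : i ∈ E) :
    |(Xpw.pair x).1 i| ≤ ‖restrict E x‖ := by
  have h := lp.norm_apply_le_norm (ofReal_ne_zero_of_two_lt hp) (Xpw.pair (restrict E x)).1 i
  rw [pair_restrict_fst, Set.indicator_of_mem hi] at h
  exact h.trans (le_max_left _ _)

/-- Hölder's inequality on a finite set of coordinates. -/
theorem holder_restrict (hp : 2 < p) (hw : ∀ n, 0 < w n) (E : Set ℕ) (hE : E.Finite)
    (x : Xpw p w) :
    nrm2 (restrict E x) ≤ omegaE p w E ^ ((p - 2) / (2 * p)) * nrmP (restrict E x) := by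
  obtain ⟨s, rfl⟩ := hE.exists_finset_coe
  have hp0 : 0 < p := by linarith
  have hp2 : 0 < p - 2 := by linarith
  have hom : omegaE p w (s : Set ℕ) = ∑ n ∈ s, w n ^ (2 * p / (p - 2)) := by
    unfold omegaE
    exact Finset.tsum_subtype' s (fun n => w n ^ (2 * p / (p - 2)))
  have hN2 : nrm2 (restrict (s : Set ℕ) x) ^ (2 : ℝ)
      = ∑ n ∈ s, |(Xpw.pair x).1 n| ^ (2 : ℝ) * w n ^ (2 : ℝ) := by
    unfold nrm2
    have h := lp.norm_rpow_eq_tsum (p := 2) (by norm_num) (Xpw.pair (restrict (s : Set ℕ) x)).2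
    rw [ENNReal.toReal_ofNat] at h
    rw [h, tsum_eq_sum (s := s)]
    · refine Finset.sum_congr rfl fun n hn => ?_
      rw [pair_restrict_snd, Set.indicator_of_mem (by simpa using hn), pair_snd_apply,
        Real.norm_eq_abs, abs_mul, Real.mul_rpow (abs_nonneg _) (abs_nonneg _),
        abs_of_pos (hw n), mul_comm]
    · intro n hn
      rw [pair_restrict_snd, Set.indicator_of_notMem (by simpa using hn)]
      simp
  have hNp : nrmP (restrict (s : Set ℕ) x) ^ p = ∑ n ∈ s, |(Xpw.pair x).1 n| ^ p := by
    unfold nrmP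
    have h := lp.norm_rpow_eq_tsum (p := ENNReal.ofReal p)
      (by rw [ENNReal.toReal_ofReal hp0.le]; exact hp0) (Xpw.pair (restrict (s : Set ℕ) x)).1
    rw [ENNReal.toReal_ofReal hp0.le] at h
    rw [h, tsum_eq_sum (s := s)]
    · refine Finset.sum_congr rfl fun n hn => ?_
      rw [pair_restrict_fst, Set.indicator_of_mem (by simpa using hn), Real.norm_eq_abs]
    · intro n hn
      rw [pair_restrict_fst, Set.indicator_of_notMem (by simpa using hn)]
      simp [Real.zero_rpow hp0.ne']
  have hconj : (p / 2).HolderConjugate (p / (p - 2)) := by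
    rw [Real.holderConjugate_iff]
    constructor
    · linarith
    · field_simp
      ring
  have hH := Real.inner_le_Lp_mul_Lq_of_nonneg s hconj
    (f := fun n => |(Xpw.pair x).1 n| ^ (2 : ℝ)) (g := fun n => w n ^ (2 : ℝ))
    (fun i _ => by positivity) (fun i _ => Real.rpow_nonneg (hw i).le _)
  have e1 : ∀ n, (|(Xpw.pair x).1 n| ^ (2 : ℝ)) ^ (p / 2) = |(Xpw.pair x).1 n| ^ p := by
    intro n
    rw [← Real.rpow_mul (abs_nonneg _)]
    congr 1; field_simp
  have e2 : ∀ n, (w n ^ (2 : ℝ)) ^ (p / (p - 2)) = w n ^ (2 * p / (p - 2)) := by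
    intro n
    rw [← Real.rpow_mul (hw n).le]
    congr 1; ring
  simp only [e1, e2] at hH
  rw [← hN2, ← hNp, ← hom] at hH
  set a := nrm2 (restrict (s : Set ℕ) x) with ha
  set b := nrmP (restrict (s : Set ℕ) x) with hb
  set o := omegaE p w (s : Set ℕ) with ho
  have ha0 : 0 ≤ a := nrm2_nonneg _
  have hb0 : 0 ≤ b := nrmP_nonneg _
  have ho0 : 0 ≤ o := by
    rw [hom]; exact Finset.sum_nonneg fun i _ => Real.rpow_nonneg (hw i).le _
  have e3 : (b ^ p) ^ (1 / (p / 2)) = b ^ (2 : ℝ) := by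
    rw [← Real.rpow_mul hb0]; congr 1; field_simp
  have e4 : o ^ (1 / (p / (p - 2))) = (o ^ ((p - 2) / (2 * p))) ^ (2 : ℝ) := by
    rw [← Real.rpow_mul ho0]; congr 1; field_simp
  rw [e3, e4, ← Real.mul_rpow hb0 (Real.rpow_nonneg ho0 _), mul_comm] at hH
  exact (Real.rpow_le_rpow_iff ha0 (mul_nonneg (Real.rpow_nonneg ho0 _) hb0) two_pos).1 hH

theorem complete_of_equiv {E F : Type*} [NormedAddCommGroup E] [NormedSpace ℝ E]
    [NormedAddCommGroup F] [NormedSpace ℝ F] [CompleteSpace F] (e : E ≃L[ℝ] F) :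
    CompleteSpace E :=
  (completeSpace_congr (e := e.toEquiv) e.isUniformEmbedding).2 inferInstance

theorem decomp {V : Type*} [NormedAddCommGroup V] [NormedSpace ℝ V] [CompleteSpace V]
    (X U W : Submodule ℝ V) (hXUW : X = U ⊔ W) (hUWdisj : U ⊓ W = ⊥)
    [CompleteSpace U] [CompleteSpace W] (P : V →L[ℝ] V)
    (hPX : ∀ x, P x ∈ X) (hPid : ∀ x ∈ X, P x = x) :
    ∃ (A : V →L[ℝ] U) (B : V →L[ℝ] W), ∀ x ∈ X, (A x : V) + B x = x := by
  have hXc : IsClosed (X : Set V) := by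
    have : (X : Set V) = {x | P x = x} := by
      ext x
      exact ⟨fun h => hPid x h, fun h => by rw [← (show P x = x from h)]; exact hPX x⟩
    rw [this]
    exact isClosed_eq P.continuous continuous_id
  haveI : CompleteSpace X := hXc.completeSpace_coe
  have hUX : U ≤ X := hXUW ▸ le_sup_left
  have hWX : W ≤ X := hXUW ▸ le_sup_right
  let L0 : (U × W) →L[ℝ] V := U.subtypeL.coprod W.subtypeL
  have hL0 : ∀ z : U × W, L0 z = (z.1 : V) + z.2 := fun z => by simp [L0]
  let L : (U × W) →L[ℝ] X := L0.codRestrict X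
    (fun z => by rw [hL0]; exact X.add_mem (hUX z.1.2) (hWX z.2.2))
  have hL : ∀ z : U × W, ((L z : X) : V) = (z.1 : V) + z.2 := fun z => hL0 z
  have hinj : L.ker = ⊥ := by
    rw [LinearMap.ker_eq_bot']
    intro z hz
    have h0 : (z.1 : V) + z.2 = 0 := by
      rw [← hL z]
      exact congrArg Subtype.val hz
    have h1 : (z.1 : V) = -(z.2 : V) := eq_neg_of_add_eq_zero_left h0
    have h2 : (z.1 : V) ∈ U ⊓ W := ⟨z.1.2, by rw [h1]; exact W.neg_mem z.2.2⟩
    rw [hUWdisj, Submodule.mem_bot] at h2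
    have h3 : (z.2 : V) = 0 := by rw [h2, zero_add] at h0; exact h0
    exact Prod.ext (Subtype.ext h2) (Subtype.ext h3)
  have hsurj : L.range = ⊤ := by
    rw [LinearMap.range_eq_top]
    intro x
    have hx : (x : V) ∈ U ⊔ W := hXUW ▸ x.2
    obtain ⟨u, hu, v, hv, huv⟩ := Submodule.mem_sup.1 hx
    exact ⟨(⟨u, hu⟩, ⟨v, hv⟩), Subtype.ext ((hL _).trans huv)⟩
  let T := (ContinuousLinearEquiv.ofBijective L hinj hsurj).symm
  let Q : V →L[ℝ] X := P.codRestrict X hPX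
  let R : V →L[ℝ] U × W := (T : X →L[ℝ] U × W).comp Q
  refine ⟨(ContinuousLinearMap.fst ℝ U W).comp R, (ContinuousLinearMap.snd ℝ U W).comp R, ?_⟩
  intro x hx
  have h1 : L (R x) = Q x := ContinuousLinearEquiv.ofBijective_apply_symm_apply L hinj hsurj (Q x)
  have h2 := hL (R x)
  rw [h1] at h2
  have h3 : ((Q x : X) : V) = x := hPid x hx
  rw [h3] at h2
  exact h2.symm

end

end XpwLemmas

open Filter in
/-- Corollary 2.2: suppose `X = U ⊕ W ⊆ X_p` with `U` isomorphic to
`ℓ_2`, `W` isomorphic to `ℓ_p`, and `X` complemented in `X_p` with projection `P`; let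
`β' ≤ 1` be as in Proposition 2.1.  Then for any `c, δ > 0` and
`0 < ε < β' c δ / max {c, δ⁻¹}` there is no `0 < ε' < ε` such that for every `N` there
are a norm-one `x ∈ X` and a finite `E ⊆ {N, N+1, …}` satisfying (a) `‖x_{|[1,N]}‖ < N⁻¹`,
(b) `|x_{|E}|_2 ≥ δ |x|_2`, (c) `ε ≥ c |x_{|E}|_2 ≥ ω(E)^{(p-2)/(2p)} ≥ ε'`. -/
theorem stmt11 (p : ℝ) (hp : 2 < p) [Fact (1 ≤ ENNReal.ofReal p)]
    (w : ℕ → ℝ) (hw : IsXpWeight p w)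
    (X U W : Submodule ℝ (Xpw p w))
    (hXUW : X = U ⊔ W) (hUWdisj : U ⊓ W = ⊥)
    (hU2 : Nonempty (↥U ≃L[ℝ] Seq2)) (hWp : Nonempty (↥W ≃L[ℝ] SeqP p))
    (P : Xpw p w →L[ℝ] Xpw p w)
    (hPX : ∀ x : Xpw p w, P x ∈ X) (hPid : ∀ x ∈ X, P x = x)
    (β' : ℝ)
    (hβ' : Tendsto (fun n : ℕ => sInf {b : ℝ | ∀ ε : ℝ, 0 < ε →
        ∃ u : Xpw p w, u ∈ U ∧ u ≠ 0 ∧ ‖restrict {k : ℕ | k < n} u‖ < ε ∧ ratio u ≤ b})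
      atTop (nhds β'))
    (hβ'1 : β' ≤ 1)
    (c δ ε : ℝ) (hc : 0 < c) (hδ : 0 < δ) (hε0 : 0 < ε)
    (hε : ε < β' * c * δ / max c δ⁻¹) :
    ¬ ∃ ε' : ℝ, 0 < ε' ∧ ε' < ε ∧
      ∀ N : ℕ, 1 ≤ N → ∃ x : Xpw p w, x ∈ X ∧ ‖x‖ = 1 ∧
        ∃ E : Set ℕ, E.Finite ∧ E ⊆ {n : ℕ | N ≤ n} ∧
          ‖restrict {n : ℕ | n < N} x‖ < (N : ℝ)⁻¹ ∧
          nrm2 (restrict E x) ≥ δ * nrm2 x ∧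
          ε ≥ c * nrm2 (restrict E x) ∧
          c * nrm2 (restrict E x) ≥ omegaE p w E ^ ((p - 2) / (2 * p)) ∧
          omegaE p w E ^ ((p - 2) / (2 * p)) ≥ ε' := by
  rintro ⟨ε', hε'0, hε'ε, hN⟩
  haveI : CompleteSpace (Xpw p w) := Xpw_complete
  obtain ⟨eU⟩ := hU2
  obtain ⟨eW⟩ := hWp
  haveI : CompleteSpace U := complete_of_equiv eU
  haveI : CompleteSpace W := complete_of_equiv eW
  obtain ⟨A, B, hAB⟩ := decomp X U W hXUW hUWdisj P hPX hPid
  choose x hxX hx1 E hEfin hEsub ha hb hc1 hc2 hc3 using fun N : ℕ => hN (N + 1) (Nat.le_add_left 1 N)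
  -- coordinates of `x` tend to zero
  have hxcoord : ∀ i, Tendsto (fun n => (Xpw.pair (x n)).1 i) atTop (nhds 0) := by
    intro i
    refine squeeze_zero_norm' ?_ (tendsto_one_div_add_atTop_nhds_zero_nat (𝕜 := ℝ))
    filter_upwards [eventually_ge_atTop i] with n hn
    have h1 := abs_coord_le hp (x n) {m : ℕ | m < n + 1} i (by simp; omega)
    have h2 := ha n
    push_cast at h2
    rw [Real.norm_eq_abs, one_div]
    exact h1.trans h2.le
  have hweak : ∀ g : Xpw p w →L[ℝ] ℝ, Tendsto (fun n => g (x n)) atTop (nhds 0) :=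
    fun g => Xpw_weak_null hp x 1 (fun n => (hx1 n).le) hxcoord g
  -- the `W` component
  have hv : Tendsto (fun n => nrm2 (B (x n) : Xpw p w)) atTop (nhds 0) := by
    let S : SeqP p →L[ℝ] Seq2 := (ContinuousLinearMap.snd ℝ (SeqP p) Seq2).comp
      ((pairL p w).toContinuousLinearMap.comp
        (W.subtypeL.comp (eW.symm : SeqP p →L[ℝ] W)))
    let D : Xpw p w →L[ℝ] SeqP p := (eW : W →L[ℝ] SeqP p).comp B
    have h := pitt_null (q := ENNReal.ofReal p) ENNReal.ofReal_ne_top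
      (by rw [ENNReal.toReal_ofReal (by linarith)]; exact hp) (fun n => D (x n)) ‖D‖
      (fun n => by
        have := D.le_opNorm (x n)
        rwa [hx1 n, mul_one] at this)
      (fun i => hweak ((lp.evalCLM ℝ (fun _ : ℕ => ℝ) (ENNReal.ofReal p) i).comp D)) S
    refine h.congr fun n => ?_
    have : eW.symm (D (x n)) = B (x n) := eW.symm_apply_apply (B (x n))
    change ‖(Xpw.pair (eW.symm (D (x n)) : Xpw p w)).2‖ = _
    rw [this]
    rfl
  -- the `U` component
  have hu : ∀ k : ℕ, Tendsto (fun n => ‖restrict {j : ℕ | j < k} (A (x n) : Xpw p w)‖)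
      atTop (nhds 0) := by
    intro k
    refine restrict_lt_tendsto (fun n => (A (x n) : Xpw p w)) (fun i => ?_) k
    exact hweak ((lp.evalCLM ℝ (fun _ : ℕ => ℝ) (ENNReal.ofReal p) i).comp
      ((ContinuousLinearMap.fst ℝ (SeqP p) Seq2).comp
      ((pairL p w).toContinuousLinearMap.comp (U.subtypeL.comp A))))
  have hmax : 0 < max c δ⁻¹ := lt_max_of_lt_left hc
  have hεδ : ε / δ < β' := by
    rw [lt_div_iff₀ hmax] at hε
    have h1 : ε * c ≤ ε * max c δ⁻¹ := by gcongr; exact le_max_left _ _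
    rw [div_lt_iff₀ hδ]
    nlinarith
  obtain ⟨β, hβ1, hβ2⟩ := exists_between hεδ
  have hβ0 : 0 < β := lt_trans (by positivity) hβ1
  obtain ⟨k, hk⟩ := (hβ'.eventually (lt_mem_nhds hβ2)).exists
  have hnot : ∃ ε0 : ℝ, 0 < ε0 ∧ ∀ u : Xpw p w, u ∈ U → u ≠ 0 →
      ‖restrict {j : ℕ | j < k} u‖ < ε0 → β < ratio u := by
    by_contra hcon
    push Not at hcon
    refine absurd hk (not_lt.2 (csInf_le ⟨0, ?_⟩ ?_))
    · intro b hb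
      obtain ⟨u, -, -, -, h⟩ := hb 1 one_pos
      exact (div_nonneg (nrm2_nonneg u) (nrmP_nonneg u)).trans h
    · intro ε0 hε0
      obtain ⟨u, h1, h2, h3, h4⟩ := hcon ε0 hε0
      exact ⟨u, h1, h2, h3, h4⟩
  obtain ⟨ε0, hε0pos, hratio⟩ := hnot
  set g := (ε' / c) * (β - ε / δ) / (β + ε) with hg
  have hg0 : 0 < g := by
    have : 0 < β - ε / δ := by linarith
    positivity
  obtain ⟨n, hn1, hn2, hn3⟩ := (((hu k).eventually (gt_mem_nhds hε0pos)).and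
    ((hv.eventually (gt_mem_nhds hg0)).and
      (hv.eventually (gt_mem_nhds (show 0 < ε' / c by positivity))))).exists
  have hsum := hAB (x n) (hxX n)
  set u : Xpw p w := (A (x n) : Xpw p w) with hudef
  set v : Xpw p w := (B (x n) : Xpw p w) with hvdef
  set η := nrm2 v with hη
  have hη0 : 0 ≤ η := nrm2_nonneg _
  set y := nrm2 (restrict (E n) (x n)) with hy
  have hylow : ε' / c ≤ y := by
    rw [div_le_iff₀ hc, mul_comm]
    exact (hc3 n).trans (hc2 n)
  have hyup : c * y ≤ ε := hc1 n
  have hy0 : 0 < y := lt_of_lt_of_le (by positivity) hylow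
  have huE : y ≤ nrm2 (restrict (E n) u) + η := by
    have h1 := nrm2_restrict_add_le (E n) u v
    rw [hsum] at h1
    exact h1.trans (by gcongr; exact nrm2_restrict_le _ _)
  have hu0 : u ≠ 0 := by
    intro h
    have h1 : nrm2 u = 0 := by
      rw [h]; exact norm_zero (E := Seq2)
    have h2 := nrm2_restrict_le (E n) u
    linarith
  have hr := hratio u (A (x n)).2 hu0 hn1
  have hup : 0 < nrmP u := by
    refine lt_of_le_of_ne (nrmP_nonneg u) fun h => ?_
    unfold ratio at hr
    rw [← h, div_zero] at hr
    linarith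
  have hr2 : β * nrmP u < nrm2 u := (lt_div_iff₀ hup).1 hr
  have hu2 : nrm2 u ≤ nrm2 (x n) + η := by
    have h1 := nrm2_add_le (x n) (-v)
    have h2 : x n + -v = u := by rw [← hsum]; abel
    have h3 : nrm2 (-v) = η := norm_neg (Xpw.pair v).2
    rwa [h2, h3] at h1
  have hx2 : nrm2 (x n) ≤ ε / (c * δ) := by
    rw [le_div_iff₀ (by positivity)]
    have := hb n
    nlinarith
  have hH := holder_restrict hp hw.1 (E n) (hEfin n) u
  have hH2 : nrm2 (restrict (E n) u) ≤ (c * y) * nrmP u :=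
    hH.trans (mul_le_mul (hc2 n) (nrmP_restrict_le hp _ _) (nrmP_nonneg _) (by positivity))
  have k1 : β * nrmP u ≤ ε / (c * δ) + η := by linarith
  have k2 : β * (y - η) ≤ (c * y) * (ε / (c * δ) + η) := by
    calc β * (y - η) ≤ β * ((c * y) * nrmP u) := by gcongr; linarith
      _ = (c * y) * (β * nrmP u) := by ring
      _ ≤ _ := by gcongr
  have k3 : (c * y) * (ε / (c * δ) + η) = y * (ε / δ) + c * y * η := by
    field_simp
  have k4 : c * y * η ≤ ε * η := by gcongr
  have k5 : (ε' / c) * (β - ε / δ) ≤ y * (β - ε / δ) := by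
    gcongr
  have k6 : η * (β + ε) < (ε' / c) * (β - ε / δ) := (lt_div_iff₀ (by positivity)).1 hn2
  rw [k3] at k2
  linarith
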